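/- Let n ≥ 1, x ∈ ℝⁿ, and y ∈ ℝⁿ with y_i ≥ 0 for all i and y ≠ 0. Then ln( Σ_{i=1}^n e^{x_i} y_i ) = inf { Σ_{i=1}^n f_i y_i + t : (f, t, u) ∈ ℝⁿ × ℝ × ℝ, f_i ≥ e^{x_i + u} for all i, and t ≥ −u − 1 }. -/

import Mathlib

theorem stmt_18 {n : ℕ} (hn : 1 ≤ n) (x y : Fin n → ℝ)
    (hy : ∀ i, 0 ≤ y i) (hy0 : y ≠ 0) :
    Real.log (∑ i, Real.exp (x i) * y i) =
      sInf {z : ℝ | ∃ (f : Fin n → ℝ) (t u : ℝ),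
        z = ∑ i, f i * y i + t ∧ (∀ i, Real.exp (x i + u) ≤ f i) ∧ -u - 1 ≤ t} := by
  have hS : 0 < ∑ i, Real.exp (x i) * y i := by
    obtain ⟨j, hj⟩ := Function.ne_iff.mp hy0
    refine Finset.sum_pos' (fun i _ => mul_nonneg (Real.exp_pos _).le (hy i))
      ⟨j, Finset.mem_univ j, mul_pos (Real.exp_pos _) (lt_of_le_of_ne (hy j) (Ne.symm hj))⟩
  have key : ∀ u : ℝ, ∑ i, Real.exp (x i + u) * y i =
      Real.exp (Real.log (∑ i, Real.exp (x i) * y i) + u) := by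
    intro u
    rw [Real.exp_add, Real.exp_log hS, Finset.sum_mul]
    refine Finset.sum_congr rfl fun i _ => ?_
    rw [Real.exp_add]
    ring
  symm
  apply IsLeast.csInf_eq
  constructor
  · refine ⟨fun i => Real.exp (x i + -Real.log (∑ i, Real.exp (x i) * y i)),
      Real.log (∑ i, Real.exp (x i) * y i) - 1, -Real.log (∑ i, Real.exp (x i) * y i),
      ?_, fun i => le_rfl, by linarith⟩
    rw [key, add_neg_cancel, Real.exp_zero]
    ring
  · rintro z ⟨f, t, u, rfl, hf, ht⟩
    have h1 : ∑ i, Real.exp (x i + u) * y i ≤ ∑ i, f i * y i :=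
      Finset.sum_le_sum fun i _ => mul_le_mul_of_nonneg_right (hf i) (hy i)
    rw [key] at h1
    have h2 := Real.add_one_le_exp (Real.log (∑ i, Real.exp (x i) * y i) + u)
    linarith
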